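/- arXiv:1306.5880 — 3 statements merged into one kernel-verified Lean document; each statement's English description precedes it below -/
import Mathlib

section
/- Let p, q > 2 be real numbers with log p / log q = n₀/m₀ where n₀, m₀ are coprime positive integers, and set α = 1/p, β = 1/q. If λ = q(p−1)/(p(q−1)) and (m₀ + n₀)·log 2 + log(3/4) < m₀·log p, then the Lebesgue measure of C_α − λ·C_β is zero. -/
/-!
Put `a = 1 / p` and `b = 1 / q`. The ratio `l` is the one for which the leading digits of `C_a` and
`l C_b` agree: with `c = 1 - a = l (1 - b)`, they satisfy `C_a = {0, c} + a C_a` and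
`l C_b = {0, c} + b (l C_b)`. The logarithmic hypothesis says that `a ^ m₀ = b ^ n₀ =: r`, so
iterating these relations `m₀` and `n₀` times puts `T = C_a - l C_b` inside `D + r T`, where `D` is
the set of differences of the truncated expansions. The two leading digits enter `D` only through
their difference in `{-c, 0, c}`, which takes three values instead of four, whence
`#D ≤ 3 * 2 ^ (m₀ - 1) * 2 ^ (n₀ - 1) = (3 / 4) * 2 ^ (m₀ + n₀) < r⁻¹`. Since `T` is bounded,
`vol T ≤ #D * r * vol T` forces `vol T = 0`.
-/

open Set MeasureTheory

/-- The middle Cantor set `C_a`, for `0 < a < 1/2`: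
`C_a = { (1-a) * ∑ εₖ aᵏ : εₖ ∈ {0,1} }`. -/
noncomputable def middleCantor (a : ℝ) : Set ℝ :=
  {x : ℝ | ∃ ε : ℕ → Bool, x = (1 - a) * ∑' k : ℕ, (if ε k then a ^ k else 0)}

/-- The arithmetic difference `C_a - l · C_b`. -/
noncomputable def diffSet (a b l : ℝ) : Set ℝ :=
  {z : ℝ | ∃ x ∈ middleCantor a, ∃ y ∈ middleCantor b, z = x - l * y}

open scoped Pointwise Finset

/-- The sums `∑ i < m, r ^ i • dᵢ` with digits `dᵢ ∈ A`, i.e. the translations of the level-`m`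
pieces of a set satisfying `X = A + r • X`. -/
def truncatedExpansions {R E : Type*} [Monoid R] [AddCommMonoid E] [DistribMulAction R E]
    [DecidableEq E] (A : Finset E) (r : R) (m : ℕ) : Finset E :=
  ∑ i ∈ Finset.range m, r ^ i • A

section SelfSimilar

variable {R E : Type*} [Monoid R] [AddCommMonoid E] [DistribMulAction R E] [DecidableEq E]

lemma card_sum_smul_finset_le {ι : Type*} (I : Finset ι) (c : ι → R) (A : Finset E) :
    #(∑ i ∈ I, c i • A) ≤ #A ^ #I := by
  classical
  induction I using Finset.induction_on with
  | empty => simp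
  | insert i I hi ih =>
    rw [Finset.sum_insert hi, Finset.card_insert_of_notMem hi, pow_succ']
    exact Finset.card_add_le.trans (Nat.mul_le_mul Finset.card_smul_finset_le ih)

lemma card_truncatedExpansions_add_le (A B : Finset E) (a b : R) (m n : ℕ) :
    #(truncatedExpansions A a (m + 1) + truncatedExpansions B b (n + 1)) ≤
      #(A + B) * #A ^ m * #B ^ n := by
  have htail (C : Finset E) (r : R) (k : ℕ) :
      #(∑ i ∈ Finset.range k, r ^ (i + 1) • C) ≤ #C ^ k := by
    simpa only [Finset.card_range] using
      card_sum_smul_finset_le (Finset.range k) (fun i => r ^ (i + 1)) C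
  simp only [truncatedExpansions, Finset.sum_range_succ', pow_zero, one_smul]
  rw [add_add_add_comm, add_comm, ← add_assoc]
  exact Finset.card_add_le.trans <| Nat.mul_le_mul
    (Finset.card_add_le.trans <| Nat.mul_le_mul_left _ (htail A a m)) (htail B b n)

lemma smul_subset_smul_add_smul_smul {S : Type*} [CommMonoid S] [DistribMulAction S E]
    {X : Set E} {A : Finset E} {r : S} (hX : X ⊆ A + r • X) (c : S) :
    c • X ⊆ ↑(c • A) + r • (c • X) := by
  rw [Finset.coe_smul_finset, smul_comm, ← smul_add]
  exact smul_set_mono hX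

lemma subset_truncatedExpansions_add {X : Set E} {A : Finset E} {r : R} (hX : X ⊆ A + r • X)
    (m : ℕ) : X ⊆ truncatedExpansions A r m + r ^ m • X := by
  induction m with
  | zero => simp [truncatedExpansions]
  | succ m ih =>
    calc X ⊆ truncatedExpansions A r m + r ^ m • X := ih
      _ ⊆ truncatedExpansions A r m + r ^ m • (A + r • X) := by gcongr
      _ = truncatedExpansions A r (m + 1) + r ^ (m + 1) • X := by
        rw [smul_add, smul_smul, ← pow_succ, ← add_assoc, truncatedExpansions,
          truncatedExpansions, Finset.sum_range_succ, Finset.coe_add, Finset.coe_smul_finset]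

lemma add_subset_truncatedExpansions_add {X Y : Set E} {A B : Finset E} {a b : R}
    (hX : X ⊆ A + a • X) (hY : Y ⊆ B + b • Y) {m n : ℕ} (hab : a ^ m = b ^ n) :
    X + Y ⊆ ↑(truncatedExpansions A a m + truncatedExpansions B b n) + a ^ m • (X + Y) := by
  rw [Finset.coe_add, smul_add, add_add_add_comm]
  exact add_subset_add (subset_truncatedExpansions_add hX m)
    (hab ▸ subset_truncatedExpansions_add hY n)

end SelfSimilar

section Haar

variable {E : Type*} [NormedAddCommGroup E] [NormedSpace ℝ E] [FiniteDimensional ℝ E]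
  [MeasurableSpace E] [BorelSpace E] (μ : Measure E) [μ.IsAddHaarMeasure]

lemma addHaar_finset_add_smul_le (D : Finset E) (r : ℝ) (s : Set E) :
    μ (D + r • s) ≤ ENNReal.ofReal (#D * |r| ^ Module.finrank ℝ E) * μ s := by
  calc μ (D + r • s) = μ (⋃ d ∈ D, d +ᵥ r • s) := by
        rw [← vadd_eq_add, ← iUnion_vadd_set]; rfl
    _ ≤ ∑ d ∈ D, μ (d +ᵥ r • s) := measure_biUnion_finset_le D _
    _ = ENNReal.ofReal (#D * |r| ^ Module.finrank ℝ E) * μ s := by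
        simp only [measure_vadd, Measure.addHaar_smul, Finset.sum_const, nsmul_eq_mul, abs_pow]
        rw [ENNReal.ofReal_mul (Nat.cast_nonneg _), ENNReal.ofReal_natCast, mul_assoc]

lemma addHaar_eq_zero_of_subset_finset_add_smul {s : Set E} (hs : μ s ≠ ⊤) {D : Finset E} {r : ℝ}
    (hsub : s ⊆ D + r • s) (hD : #D * |r| ^ Module.finrank ℝ E < 1) : μ s = 0 := by
  by_contra h0
  refine (measure_mono hsub |>.trans <| addHaar_finset_add_smul_le μ D r s).not_gt ?_
  simpa only [one_mul] using ENNReal.mul_lt_mul_left h0 hs (ENNReal.ofReal_lt_one.2 hD)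

lemma addHaar_add_eq_zero_of_subset_finset_add_smul [DecidableEq E] {X Y : Set E}
    (hXY : μ (X + Y) ≠ ⊤) {A B : Finset E} {a b : ℝ} (hX : X ⊆ A + a • X) (hY : Y ⊆ B + b • Y)
    {m n : ℕ} (hab : a ^ (m + 1) = b ^ (n + 1))
    (hcard : (#(A + B) * #A ^ m * #B ^ n : ℕ) * |a ^ (m + 1)| ^ Module.finrank ℝ E < 1) :
    μ (X + Y) = 0 := by
  refine addHaar_eq_zero_of_subset_finset_add_smul μ hXY
    (add_subset_truncatedExpansions_add hX hY hab) (lt_of_le_of_lt ?_ hcard)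
  gcongr
  exact card_truncatedExpansions_add_le A B a b m n

end Haar

lemma card_pair_zero_add_pair_zero_neg_le {G : Type*} [AddGroup G] [DecidableEq G] (c : G) :
    #({0, c} + {0, -c} : Finset G) ≤ 3 := by
  have h : ({0, c} + {0, -c} : Finset G) ⊆ {-c, 0, c} := by
    intro x
    simp only [Finset.mem_add, Finset.mem_insert, Finset.mem_singleton]
    rintro ⟨y, rfl | rfl, z, rfl | rfl, rfl⟩ <;> simp
  exact (Finset.card_le_card h).trans Finset.card_le_three

section MiddleCantor

variable {a b : ℝ}

lemma norm_ite_pow_le (a : ℝ) (ε : ℕ → Bool) (k : ℕ) :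
    ‖if ε k then a ^ k else 0‖ ≤ |a| ^ k := by
  split_ifs
  · exact (norm_pow a k).le
  · simp

lemma isBounded_middleCantor (ha : |a| < 1) : Bornology.IsBounded (middleCantor a) := by
  refine isBounded_iff_forall_norm_le.2 ⟨‖1 - a‖ * (1 - |a|)⁻¹, ?_⟩
  rintro x ⟨ε, rfl⟩
  rw [norm_mul]
  gcongr
  exact tsum_of_norm_bounded (hasSum_geometric_of_lt_one (abs_nonneg a) ha)
    (norm_ite_pow_le a ε)

lemma middleCantor_subset_add_smul (ha : |a| < 1) :
    middleCantor a ⊆ ↑({0, 1 - a} : Finset ℝ) + a • middleCantor a := by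
  rintro x ⟨ε, rfl⟩
  have hsum : Summable fun k => if ε k then a ^ k else 0 :=
    (summable_geometric_of_lt_one (abs_nonneg a) ha).of_norm_bounded (norm_ite_pow_le a ε)
  have htail (k : ℕ) : (if ε (k + 1) then a ^ (k + 1) else 0) =
      a * if ε (k + 1) then a ^ k else 0 := by
    rw [mul_ite, mul_zero, pow_succ']
  refine ⟨if ε 0 then 1 - a else 0, ?_, _, smul_mem_smul_set ⟨fun k => ε (k + 1), rfl⟩, ?_⟩
  · split_ifs <;> simp
  · simp only [hsum.tsum_eq_zero_add, htail, tsum_mul_left, smul_eq_mul, pow_zero]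
    split_ifs <;> ring

lemma diffSet_eq_add_smul (a b l : ℝ) :
    diffSet a b l = middleCantor a + (-l) • middleCantor b := by
  ext z
  simp only [diffSet, mem_ofPred_eq, mem_add, mem_smul_set, exists_exists_and_eq_and, smul_eq_mul,
    neg_mul, ← sub_eq_add_neg, @eq_comm ℝ z]

lemma neg_smul_middleCantor_subset_add_smul (hb : |b| < 1) {l : ℝ} (hl : l * (1 - b) = 1 - a) :
    (-l) • middleCantor b ⊆ ↑({0, -(1 - a)} : Finset ℝ) + b • ((-l) • middleCantor b) := by
  have hdigits : (-l) • ({0, 1 - b} : Finset ℝ) = {0, -(1 - a)} := by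
    simp only [Finset.smul_finset_insert, Finset.smul_finset_singleton, smul_eq_mul, mul_zero,
      neg_mul, hl]
  exact hdigits ▸ smul_subset_smul_add_smul_smul (middleCantor_subset_add_smul hb) (-l)

lemma volume_diffSet_eq_zero (ha : |a| < 1) (hb : |b| < 1) {l : ℝ} (hl : l * (1 - b) = 1 - a)
    {m n : ℕ} (hm : m ≠ 0) (hn : n ≠ 0) (hab : a ^ m = b ^ n)
    (hsize : 2 ^ (m + n) * (3 / 4) * |a| ^ m < 1) : volume (diffSet a b l) = 0 := by
  obtain ⟨m, rfl⟩ := Nat.exists_eq_succ_of_ne_zero hm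
  obtain ⟨n, rfl⟩ := Nat.exists_eq_succ_of_ne_zero hn
  have hbdd : Bornology.IsBounded (middleCantor a + (-l) • middleCantor b) :=
    (isBounded_middleCantor ha).add ((isBounded_middleCantor hb).smul₀ (-l))
  have hcard : #({0, 1 - a} + {0, -(1 - a)} : Finset ℝ) * #({0, 1 - a} : Finset ℝ) ^ m *
      #({0, -(1 - a)} : Finset ℝ) ^ n ≤ 3 * 2 ^ m * 2 ^ n := by
    gcongr
    exacts [card_pair_zero_add_pair_zero_neg_le _, Finset.card_le_two, Finset.card_le_two]
  rw [diffSet_eq_add_smul]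
  refine addHaar_add_eq_zero_of_subset_finset_add_smul volume hbdd.measure_lt_top.ne
    (middleCantor_subset_add_smul ha) (neg_smul_middleCantor_subset_add_smul hb hl) hab ?_
  rw [Module.finrank_self, pow_one, abs_pow]
  calc _ ≤ ((3 * 2 ^ m * 2 ^ n : ℕ) : ℝ) * |a| ^ (m + 1) := by gcongr
    _ = 2 ^ (m + 1 + (n + 1)) * (3 / 4) * |a| ^ (m + 1) := by push_cast; ring
    _ < 1 := hsize

end MiddleCantor

lemma pow_eq_pow_of_log_div_log_eq {x y : ℝ} (hx : 0 < x) (hy : 1 < y) {m n : ℕ} (hm : m ≠ 0)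
    (h : Real.log x / Real.log y = (n : ℝ) / m) : x ^ m = y ^ n := by
  have hlog : Real.log (x ^ m) = Real.log (y ^ n) := by
    rw [div_eq_div_iff (Real.log_pos hy).ne' (Nat.cast_ne_zero.2 hm)] at h
    rw [Real.log_pow, Real.log_pow, mul_comm, h]
  exact Real.log_injOn_pos (pow_pos hx m) (pow_pos (one_pos.trans hy) n) hlog

theorem stmt2 (p q : ℝ) (hp : 2 < p) (hq : 2 < q) (n₀ m₀ : ℕ)
    (hn₀ : 0 < n₀) (hm₀ : 0 < m₀) (hcop : Nat.Coprime n₀ m₀)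
    (hratio : Real.log p / Real.log q = (n₀ : ℝ) / (m₀ : ℝ))
    (l : ℝ) (hl : l = q * (p - 1) / (p * (q - 1)))
    (hsize : ((m₀ : ℝ) + (n₀ : ℝ)) * Real.log 2 + Real.log (3 / 4) < (m₀ : ℝ) * Real.log p) :
    volume (diffSet (1 / p) (1 / q) l) = 0 := by
  have hp0 : 0 < p := by linarith
  have abs_one_div_lt_one {x : ℝ} (hx : 2 < x) : |1 / x| < 1 := by
    rw [abs_of_pos (by positivity), div_lt_one (by positivity)]
    linarith
  have hdigits : l * (1 - 1 / q) = 1 - 1 / p := by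
    have : q ≠ 0 := by linarith
    have : q - 1 ≠ 0 := by linarith
    rw [hl]
    field_simp
  have hpow : p ^ m₀ = q ^ n₀ :=
    pow_eq_pow_of_log_div_log_eq hp0 (by linarith) hm₀.ne' hratio
  have hcount : 2 ^ (m₀ + n₀) * (3 / 4) < p ^ m₀ := by
    rw [← Real.log_lt_log_iff (by positivity) (by positivity),
      Real.log_mul (by positivity) (by norm_num), Real.log_pow, Real.log_pow, Nat.cast_add]
    exact hsize
  refine volume_diffSet_eq_zero (abs_one_div_lt_one hp) (abs_one_div_lt_one hq) hdigits
    hm₀.ne' hn₀.ne' ?_ ?_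
  · rw [one_div_pow, one_div_pow, hpow]
  · rwa [abs_of_pos (by positivity), one_div_pow, mul_one_div, div_lt_one (by positivity)]
end

section
/- Let p, q > 2 be real numbers with log p / log q = n₀/m₀ where n₀, m₀ are coprime positive integers, and set α = 1/p, β = 1/q. Let λ₁, λ₂ be nonzero real numbers such that λ₁ = (p^i / q^j)·λ₂ for some nonnegative integers i, j. Then the Hausdorff dimension of C_α − λ₁·C_β equals the Hausdorff dimension of C_α − λ₂·C_β; moreover, C_α − λ₁·C_β has Lebesgue measure zero if and only if C_α − λ₂·C_β has Lebesgue measure zero. -/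
open Set MeasureTheory

/-!
Write `D l = C_a - l C_b`. The self-similarity of `C_a` makes `D (a l)` the union of two translates
of `a D(l)`, and that of `C_b` makes `D l` the union of two translates of `D (b l)`. Nonzero
homotheties and unions of two translates of one set preserve both the Hausdorff dimension and
nullity, so both are unchanged when `l` is multiplied by `a` or by `b`, hence by any integer powers
of them.
-/

open scoped Pointwise

lemma dimH_smul {𝕜 E : Type*} [NontriviallyNormedField 𝕜] [NormedAddCommGroup E] [NormedSpace 𝕜 E]
    {c : 𝕜} (hc : c ≠ 0) (s : Set E) : dimH (c • s) = dimH s :=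
  (ContinuousLinearEquiv.smulLeft (R₁ := 𝕜) (M₁ := E) (Units.mk0 c hc)).dimH_image s

lemma addHaar_smul_eq_zero_iff {E : Type*} [NormedAddCommGroup E] [NormedSpace ℝ E]
    [MeasurableSpace E] [BorelSpace E] [FiniteDimensional ℝ E] {μ : Measure E}
    [μ.IsAddHaarMeasure] {c : ℝ} (hc : c ≠ 0) (s : Set E) : μ (c • s) = 0 ↔ μ s = 0 := by
  simp [Measure.addHaar_smul, hc]

section Translate

variable {G X : Type*} [AddGroup G] [AddAction G X]

lemma dimH_union_vadd [EMetricSpace X] [IsIsometricVAdd G X] (t : G) (s : Set X) :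
    dimH (s ∪ (t +ᵥ s)) = dimH s := by
  have hvadd : dimH (t +ᵥ s) = dimH s := (isometry_vadd X t).dimH_image s
  rw [dimH_union, hvadd, max_self]

lemma measure_union_vadd_eq_zero_iff [MeasurableSpace X] {μ : Measure X}
    [VAddInvariantMeasure G X μ] [MeasurableConstVAdd G X] (t : G) (s : Set X) :
    μ (s ∪ (t +ᵥ s)) = 0 ↔ μ s = 0 := by
  rw [measure_union_null_iff, measure_vadd, and_self]

end Translate

lemma apply_zpow_mul_of_forall_apply_mul {G₀ α : Type*} [GroupWithZero G₀] (f : G₀ → α) {c : G₀}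
    (hc : c ≠ 0) (hf : ∀ x, f (c * x) = f x) (n : ℤ) (x : G₀) : f (c ^ n * x) = f x := by
  induction n with
  | zero => rw [zpow_zero, one_mul]
  | succ n ih => rw [add_comm, zpow_one_add₀ hc, mul_assoc, hf, ih]
  | pred n ih => rw [← hf, ← mul_assoc, ← zpow_one_add₀ hc, add_sub_cancel, ih]

lemma smul_set_vadd {M A : Type*} [AddMonoid A] [DistribSMul M A] (c : M) (t : A) (s : Set A) :
    c • (t +ᵥ s) = c • t +ᵥ c • s := by
  rw [← singleton_vadd, ← singleton_vadd, vadd_eq_add, vadd_eq_add, smul_add, smul_set_singleton]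

lemma sub_vadd_set {A : Type*} [AddCommGroup A] (t : A) (u v : Set A) :
    u - (t +ᵥ v) = -t +ᵥ (u - v) := by
  rw [← singleton_vadd, ← singleton_vadd, vadd_eq_add, vadd_eq_add, sub_add_eq_sub_sub,
    sub_eq_neg_add u, neg_singleton, add_sub_assoc]

section CantorSet

variable {a : ℝ}

lemma tsum_ite_pow_succ (ha : |a| < 1) (ε : ℕ → Bool) :
    ∑' k, (if ε k then a ^ k else 0) =
      (if ε 0 then 1 else 0) + a * ∑' k, (if ε (k + 1) then a ^ k else 0) := by
  have hs : Summable fun k ↦ if ε k then a ^ k else 0 :=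
    .of_norm_bounded (summable_geometric_of_lt_one (abs_nonneg a) ha) fun k ↦ by
      split_ifs <;> simp
  rw [hs.tsum_eq_zero_add, ← tsum_mul_left]
  simp only [pow_zero, mul_ite, mul_zero, pow_succ']

lemma mem_middleCantor_iff (ha : |a| < 1) (x : ℝ) :
    x ∈ middleCantor a ↔
      ∃ d : Bool, ∃ y ∈ middleCantor a, x = (if d then 1 - a else 0) + a * y := by
  have hsucc (ε : ℕ → Bool) : (1 - a) * ∑' k, (if ε k then a ^ k else 0) =
      (if ε 0 then 1 - a else 0) + a * ((1 - a) * ∑' k, (if ε (k + 1) then a ^ k else 0)) := by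
    rw [tsum_ite_pow_succ ha, mul_add, mul_ite, mul_one, mul_zero, mul_left_comm]
  constructor
  · rintro ⟨ε, rfl⟩
    exact ⟨ε 0, _, ⟨fun k ↦ ε (k + 1), rfl⟩, hsucc ε⟩
  · rintro ⟨d, _, ⟨ε, rfl⟩, rfl⟩
    exact ⟨fun k ↦ k.casesOn d ε, (hsucc fun k ↦ k.casesOn d ε).symm⟩

lemma middleCantor_eq_union (ha : |a| < 1) :
    middleCantor a = a • middleCantor a ∪ ((1 - a) +ᵥ a • middleCantor a) := by
  ext x
  simp only [mem_union, mem_vadd_set, mem_smul_set, exists_exists_and_eq_and, smul_eq_mul,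
    vadd_eq_add, mem_middleCantor_iff ha x, Bool.exists_bool, Bool.false_eq_true, if_false,
    if_true, zero_add, eq_comm (a := x)]

end CantorSet

section DifferenceSet

variable {a b : ℝ}

lemma diffSet_eq_sub (a b l : ℝ) : diffSet a b l = middleCantor a - l • middleCantor b := by
  ext z
  constructor
  · rintro ⟨x, hx, y, hy, rfl⟩
    exact sub_mem_sub hx (smul_mem_smul_set hy)
  · rintro ⟨x, hx, _, ⟨y, hy, rfl⟩, rfl⟩
    exact ⟨x, hx, y, hy, rfl⟩

lemma diffSet_left_mul_eq_union (ha : |a| < 1) (b l : ℝ) :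
    diffSet a b (a * l) = a • diffSet a b l ∪ ((1 - a) +ᵥ a • diffSet a b l) := by
  have hsmul : a • diffSet a b l = a • middleCantor a - (a * l) • middleCantor b := by
    rw [diffSet_eq_sub, sub_eq_add_neg, smul_add, smul_set_neg, mul_smul, ← sub_eq_add_neg]
  rw [hsmul, diffSet_eq_sub]
  nth_rw 1 [middleCantor_eq_union ha]
  rw [union_sub, sub_eq_add_neg (_ +ᵥ _), vadd_add_assoc, ← sub_eq_add_neg]

lemma diffSet_eq_union_right_mul (hb : |b| < 1) (a l : ℝ) :
    diffSet a b l = diffSet a b (b * l) ∪ (-(l * (1 - b)) +ᵥ diffSet a b (b * l)) := by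
  simp only [diffSet_eq_sub]
  nth_rw 1 [middleCantor_eq_union hb]
  rw [smul_set_union, smul_set_vadd, smul_smul, mul_comm l b, sub_union, sub_vadd_set, smul_eq_mul]

lemma dimH_diffSet_left_mul (ha₀ : a ≠ 0) (ha : |a| < 1) (b l : ℝ) :
    dimH (diffSet a b (a * l)) = dimH (diffSet a b l) := by
  rw [diffSet_left_mul_eq_union ha, dimH_union_vadd, dimH_smul ha₀]

lemma dimH_diffSet_right_mul (hb : |b| < 1) (a l : ℝ) :
    dimH (diffSet a b (b * l)) = dimH (diffSet a b l) := by
  rw [diffSet_eq_union_right_mul hb a l, dimH_union_vadd]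

lemma volume_diffSet_left_mul_eq_zero_iff (ha₀ : a ≠ 0) (ha : |a| < 1) (b l : ℝ) :
    volume (diffSet a b (a * l)) = 0 ↔ volume (diffSet a b l) = 0 := by
  rw [diffSet_left_mul_eq_union ha, measure_union_vadd_eq_zero_iff, addHaar_smul_eq_zero_iff ha₀]

lemma volume_diffSet_right_mul_eq_zero_iff (hb : |b| < 1) (a l : ℝ) :
    volume (diffSet a b (b * l)) = 0 ↔ volume (diffSet a b l) = 0 := by
  rw [diffSet_eq_union_right_mul hb a l, measure_union_vadd_eq_zero_iff]

end DifferenceSet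

theorem stmt3_general (p q : ℝ) (hp : 1 < |p|) (hq : 1 < |q|) (l₁ l₂ : ℝ) (i j : ℤ)
    (hrel : l₁ = (p ^ i / q ^ j) * l₂) :
    dimH (diffSet (1 / p) (1 / q) l₁) = dimH (diffSet (1 / p) (1 / q) l₂) ∧
      (volume (diffSet (1 / p) (1 / q) l₁) = 0 ↔ volume (diffSet (1 / p) (1 / q) l₂) = 0) := by
  have ha₀ : 1 / p ≠ 0 := one_div_ne_zero (abs_pos.1 (one_pos.trans hp))
  have hb₀ : 1 / q ≠ 0 := one_div_ne_zero (abs_pos.1 (one_pos.trans hq))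
  have ha : |1 / p| < 1 := by simpa using inv_lt_one_of_one_lt₀ hp
  have hb : |1 / q| < 1 := by simpa using inv_lt_one_of_one_lt₀ hq
  have hl : l₁ = (1 / p) ^ (-i) * ((1 / q) ^ j * l₂) := by
    rw [hrel, one_div, one_div, inv_zpow', neg_neg, inv_zpow, div_eq_mul_inv, mul_assoc]
  have hinv {α : Type} (f : ℝ → α) (hfa : ∀ l, f (1 / p * l) = f l)
      (hfb : ∀ l, f (1 / q * l) = f l) : f l₁ = f l₂ := by
    rw [hl, apply_zpow_mul_of_forall_apply_mul f ha₀ hfa,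
      apply_zpow_mul_of_forall_apply_mul f hb₀ hfb]
  exact ⟨hinv (fun l ↦ dimH (diffSet (1 / p) (1 / q) l))
      (dimH_diffSet_left_mul ha₀ ha _) (dimH_diffSet_right_mul hb _),
    (hinv (fun l ↦ volume (diffSet (1 / p) (1 / q) l) = 0)
      (fun l ↦ propext (volume_diffSet_left_mul_eq_zero_iff ha₀ ha _ l))
      (fun l ↦ propext (volume_diffSet_right_mul_eq_zero_iff hb _ l))).to_iff⟩

theorem stmt3 (p q : ℝ) (hp : 2 < p) (hq : 2 < q) (n₀ m₀ : ℕ)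
    (hn₀ : 0 < n₀) (hm₀ : 0 < m₀) (hcop : Nat.Coprime n₀ m₀)
    (hratio : Real.log p / Real.log q = (n₀ : ℝ) / (m₀ : ℝ))
    (l₁ l₂ : ℝ) (hl₁ : l₁ ≠ 0) (hl₂ : l₂ ≠ 0)
    (i j : ℕ) (hrel : l₁ = (p ^ i / q ^ j) * l₂) :
    dimH (diffSet (1 / p) (1 / q) l₁) = dimH (diffSet (1 / p) (1 / q) l₂) ∧
      (volume (diffSet (1 / p) (1 / q) l₁) = 0 ↔ volume (diffSet (1 / p) (1 / q) l₂) = 0) := by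
  exact stmt3_general p q (lt_abs.2 (.inl (by linarith))) (lt_abs.2 (.inl (by linarith)))
    l₁ l₂ i j (by simpa only [zpow_natCast] using hrel)
end

section
/- Let 0 < α < 1/2 and 0 < β < 1/2, and let C_α, C_β be the corresponding middle Cantor sets. If λ > 1/(1 − 2β), or 0 < λ < 1 − 2α, then C_α − λ·C_β ≠ [−λ, 1]. -/
/-!
A point `z` lies in `C_a - l · C_b` iff the translate `z + l · C_b` meets `C_a`. Take the centre
`z = (1 - l) / 2` of `[-l, 1]`, for which the hulls of the two sets have the same centre. If the
central gap `(a, 1 - a)` of `C_a` is longer than the hull of `l · C_b`, i.e. `l < 1 - 2a`, the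
translate lies inside this gap. If the central gap of `l · C_b` is longer than the hull of `C_a`,
i.e. `1 < l (1 - 2b)`, then `C_a` lies inside the gap of the translate. So `z` is missed.
-/

open Set MeasureTheory

section

variable {𝕜 : Type*} [NormedDivisionRing 𝕜] [CompleteSpace 𝕜] {a : 𝕜}

lemma summable_ite_pow (ha : ‖a‖ < 1) (ε : ℕ → Bool) :
    Summable fun k : ℕ => if ε k then a ^ k else 0 := by
  refine .of_norm_bounded (summable_geometric_of_lt_one (norm_nonneg a) ha) fun k => ?_
  split_ifs
  · rw [norm_pow]
  · simpa only [norm_zero] using pow_nonneg (norm_nonneg a) k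

lemma tsum_ite_pow_eq_add (ha : ‖a‖ < 1) (ε : ℕ → Bool) :
    ∑' k : ℕ, (if ε k then a ^ k else 0) =
      (if ε 0 then 1 else 0) + a * ∑' k : ℕ, (if ε (k + 1) then a ^ k else 0) := by
  rw [(summable_ite_pow ha ε).tsum_eq_zero_add, ← tsum_mul_left]
  simp only [pow_zero, pow_succ', mul_ite, mul_zero]

end

section

variable {a b l : ℝ}

lemma middleCantor_subset_image_union_image (ha : |a| < 1) :
    middleCantor a ⊆
      (fun x => a * x) '' middleCantor a ∪ (fun x => a * x + (1 - a)) '' middleCantor a := by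
  rintro _ ⟨ε, rfl⟩
  rw [tsum_ite_pow_eq_add ha]
  cases ε 0
  · exact .inl ⟨_, ⟨fun k => ε (k + 1), rfl⟩, by simp only [Bool.false_eq_true, if_false]; ring⟩
  · exact .inr ⟨_, ⟨fun k => ε (k + 1), rfl⟩, by simp only [if_true]; ring⟩

lemma middleCantor_subset_Icc (ha0 : 0 ≤ a) (ha1 : a < 1) : middleCantor a ⊆ Icc 0 1 := by
  have hpos : 0 < 1 - a := sub_pos.2 ha1
  rintro _ ⟨ε, rfl⟩
  have hsum : ∑' k : ℕ, (if ε k then a ^ k else 0) ≤ ∑' k : ℕ, a ^ k := by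
    refine (summable_ite_pow (by rwa [Real.norm_of_nonneg ha0]) ε).tsum_le_tsum (fun k => ?_)
      (summable_geometric_of_lt_one ha0 ha1)
    split_ifs
    · exact le_rfl
    · positivity
  constructor
  · exact mul_nonneg hpos.le (tsum_nonneg fun k => by split_ifs <;> positivity)
  · calc (1 - a) * ∑' k : ℕ, (if ε k then a ^ k else 0)
      _ ≤ (1 - a) * ∑' k : ℕ, a ^ k := mul_le_mul_of_nonneg_left hsum hpos.le
      _ = 1 := by rw [tsum_geometric_of_lt_one ha0 ha1, mul_inv_cancel₀ hpos.ne']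

lemma middleCantor_subset_Icc_union_Icc (ha0 : 0 ≤ a) (ha1 : a < 1) :
    middleCantor a ⊆ Icc 0 a ∪ Icc (1 - a) 1 := by
  refine (middleCantor_subset_image_union_image (by rwa [abs_of_nonneg ha0])).trans
    (union_subset_union ?_ ?_) <;>
  · rintro _ ⟨x, hx, rfl⟩
    obtain ⟨hx0, hx1⟩ := middleCantor_subset_Icc ha0 ha1 hx
    have hax0 : 0 ≤ a * x := mul_nonneg ha0 hx0
    have hax1 : a * x ≤ a := mul_le_of_le_one_right ha0 hx1
    constructor <;> linarith

lemma disjoint_diffSet_left_gap (ha0 : 0 ≤ a) (ha1 : a < 1) (hb0 : 0 ≤ b) (hb1 : b < 1)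
    (hl : 0 ≤ l) : Disjoint (diffSet a b l) (Ioo a (1 - a - l)) := by
  rw [Set.disjoint_left]
  rintro _ ⟨x, hx, y, hy, rfl⟩ ⟨hlt, hgt⟩
  obtain ⟨hy0, hy1⟩ := middleCantor_subset_Icc hb0 hb1 hy
  have hly0 : 0 ≤ l * y := mul_nonneg hl hy0
  have hly1 : l * y ≤ l := mul_le_of_le_one_right hl hy1
  rcases middleCantor_subset_Icc_union_Icc ha0 ha1 hx with ⟨-, hxa⟩ | ⟨hxa, -⟩ <;> linarith

lemma disjoint_diffSet_right_gap (ha0 : 0 ≤ a) (ha1 : a < 1) (hb0 : 0 ≤ b) (hb1 : b < 1)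
    (hl : 0 ≤ l) : Disjoint (diffSet a b l) (Ioo (1 - l * (1 - b)) (-(l * b))) := by
  rw [Set.disjoint_left]
  rintro _ ⟨x, hx, y, hy, rfl⟩ ⟨hlt, hgt⟩
  obtain ⟨hx0, hx1⟩ := middleCantor_subset_Icc ha0 ha1 hx
  rcases middleCantor_subset_Icc_union_Icc hb0 hb1 hy with ⟨-, hyb⟩ | ⟨hyb, -⟩ <;>
    linarith [mul_le_mul_of_nonneg_left hyb hl]

lemma diffSet_ne_Icc_of_midpoint_notMem (hl : -1 ≤ l) (h : (1 - l) / 2 ∉ diffSet a b l) :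
    diffSet a b l ≠ Icc (-l) 1 := by
  intro heq
  rw [heq] at h
  exact h ⟨by linarith, by linarith⟩

end

theorem stmt7_general {α β l : ℝ} (hα0 : 0 ≤ α) (hα : α < 1) (hβ0 : 0 ≤ β) (hβ : β < 1)
    (hl : (β < 1 / 2 ∧ 1 / (1 - 2 * β) < l) ∨ (0 ≤ l ∧ l < 1 - 2 * α)) :
    diffSet α β l ≠ Icc (-l) 1 := by
  rcases hl with ⟨hβ_half, hl⟩ | ⟨hl0, hl⟩
  · have hgap : 0 < 1 - 2 * β := by linarith
    have hl0 : 0 ≤ l := ((one_div_pos.2 hgap).trans hl).le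
    have hlen : 1 < l * (1 - 2 * β) := (div_lt_iff₀ hgap).1 hl
    refine diffSet_ne_Icc_of_midpoint_notMem (by linarith)
      ((disjoint_diffSet_right_gap hα0 hα hβ0 hβ hl0).notMem_of_mem_right ?_)
    constructor <;> linarith
  · refine diffSet_ne_Icc_of_midpoint_notMem (by linarith)
      ((disjoint_diffSet_left_gap hα0 hα hβ0 hβ hl0).notMem_of_mem_right ?_)
    constructor <;> linarith

theorem stmt7 (α β : ℝ) (hα0 : 0 < α) (hα : α < 1 / 2) (hβ0 : 0 < β) (hβ : β < 1 / 2)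
    (l : ℝ) (hl : 1 / (1 - 2 * β) < l ∨ (0 < l ∧ l < 1 - 2 * α)) :
    diffSet α β l ≠ Set.Icc (-l) 1 :=
  stmt7_general hα0.le (by linarith) hβ0.le (by linarith)
    (hl.imp (fun h => ⟨hβ, h⟩) (And.imp_left le_of_lt))
end
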